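/- (Descent step bound for two-stage methods.) Let $f$ satisfy RSS with parameter $L$ and RSC with parameter $\alpha$ at sparsity level $2s+\ell$ and $2s+s^*$ respectively, where $\ell \ge s^*$. Let $\theta^t$ be a fully corrective iterate with support $S_t$ ($\nabla f(\theta^t)_{S_t} = 0$, $|S_t| \le s$), let $g^t = \nabla f(\theta^t)$, and let $Z_t = S_t \cup T$ where $T$ contains the $\ell$ largest coordinates of $|g^t|$ outside $S_t$. Define $z^t$ by $z^t_{S_t} = \theta^t_{S_t}$, $z^t_{T} = -\frac{1}{L} g^t_{T}$, and $z^t = 0$ elsewhere. Then $f(z^t) - f(\theta^t) \le -\frac{1}{2L}\|g^t_T\|_2^2 \le -\frac{1}{2L}\|g^t_{S^* \setminus S_t}\|_2^2 \le -\frac{\alpha}{L}(f(\theta^t) - f(\theta^*))$, where $\theta^*$ is the $s^*$-sparse minimizer with support $S^*$. -/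

import Mathlib

/-- Descent step bound for two-stage methods (eq. (tst_0) of the paper):
with RSS parameter `L` at level `2s+ℓ`, RSC parameter `α` at level `2s+s*`,
`ℓ ≥ s*`, a fully corrective iterate `θt` supported in `S_t` (`|S_t| ≤ s`,
gradient vanishing on `S_t`), `T` the `ℓ` largest-magnitude gradient
coordinates outside `S_t`, and `z^t` equal to `θt` on `S_t`, `-(1/L)g^t` on
`T`, zero elsewhere:
`f(z^t) - f(θt) ≤ -(1/2L)‖g_T‖² ≤ -(1/2L)‖g_{S*∖S_t}‖²
  ≤ -(α/L)(f(θt) - f(θ*))`. -/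
theorem descent_step_bound (p s sstar ℓ : ℕ) (α L : ℝ)
    (hα : 0 < α) (hL : 0 < L) (hl : sstar ≤ ℓ)
    (f : (Fin p → ℝ) → ℝ) (grad : (Fin p → ℝ) → Fin p → ℝ)
    (hdiff : Differentiable ℝ f)
    (hgrad : ∀ x v, fderiv ℝ f x v = ∑ i, grad x i * v i)
    (hRSS : ∀ θ1 θ2 : Fin p → ℝ,
      (Finset.univ.filter fun i => θ1 i ≠ 0).card +
          (Finset.univ.filter fun i => θ2 i ≠ 0).card ≤ 2 * s + ℓ →
      f θ1 - f θ2 ≤ (∑ i, (θ1 i - θ2 i) * grad θ2 i) +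
        L / 2 * ∑ i, (θ1 i - θ2 i) ^ 2)
    (hRSC : ∀ θ1 θ2 : Fin p → ℝ,
      (Finset.univ.filter fun i => θ1 i ≠ 0).card +
          (Finset.univ.filter fun i => θ2 i ≠ 0).card ≤ 2 * s + sstar →
      f θ1 - f θ2 ≥ (∑ i, (θ1 i - θ2 i) * grad θ2 i) +
        α / 2 * ∑ i, (θ1 i - θ2 i) ^ 2)
    (θstar : Fin p → ℝ)
    (hθstar_sp : (Finset.univ.filter fun i => θstar i ≠ 0).card ≤ sstar)
    (hθstar_min : ∀ θ : Fin p → ℝ,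
      (Finset.univ.filter fun i => θ i ≠ 0).card ≤ sstar → f θstar ≤ f θ)
    (St : Finset (Fin p)) (hSt : St.card ≤ s)
    (θt : Fin p → ℝ) (hθt_supp : ∀ i, θt i ≠ 0 → i ∈ St)
    (hθt_min : ∀ θ : Fin p → ℝ, (∀ i, θ i ≠ 0 → i ∈ St) → f θt ≤ f θ)
    (hg0 : ∀ i ∈ St, grad θt i = 0)
    (T : Finset (Fin p)) (hTdisj : Disjoint St T) (hTcard : T.card = ℓ)
    (hTtop : ∀ i ∈ T, ∀ j, j ∉ St → j ∉ T → |grad θt j| ≤ |grad θt i|)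
    (zt : Fin p → ℝ)
    (hzt : ∀ i, zt i = if i ∈ St then θt i
      else if i ∈ T then -(1 / L) * grad θt i else 0) :
    f zt - f θt ≤ -(1 / (2 * L)) * ∑ i ∈ T, (grad θt i) ^ 2 ∧
    -(1 / (2 * L)) * ∑ i ∈ T, (grad θt i) ^ 2 ≤
      -(1 / (2 * L)) *
        ∑ i ∈ (Finset.univ.filter fun i => θstar i ≠ 0) \ St,
          (grad θt i) ^ 2 ∧
    -(1 / (2 * L)) *
        ∑ i ∈ (Finset.univ.filter fun i => θstar i ≠ 0) \ St,
          (grad θt i) ^ 2 ≤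
      -(α / L) * (f θt - f θstar) := by
  have hθt_card : (Finset.univ.filter fun i => θt i ≠ 0).card ≤ s := by
    refine le_trans (Finset.card_le_card ?_) hSt
    intro i hi
    exact hθt_supp i (Finset.mem_filter.mp hi).2
  have hθt0 : ∀ i, i ∉ St → θt i = 0 := fun i hi => by
    by_contra h
    exact hi (hθt_supp i h)
  refine ⟨?_, ?_, ?_⟩
  · have hzt_card : (Finset.univ.filter fun i => zt i ≠ 0).card ≤ s + ℓ := by
      have hsub : (Finset.univ.filter fun i => zt i ≠ 0) ⊆ St ∪ T := by
        intro i hi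
        have hi2 := (Finset.mem_filter.mp hi).2
        rw [hzt i] at hi2
        by_contra h
        rw [Finset.mem_union, not_or] at h
        simp [h.1, h.2] at hi2
      have h1 := Finset.card_le_card hsub
      have h2 := Finset.card_union_le St T
      omega
    have h := hRSS zt θt (by omega)
    refine h.trans (le_of_eq ?_)
    rw [Finset.mul_sum, ← Finset.sum_add_distrib, Finset.mul_sum,
      ← Finset.sum_subset (Finset.subset_univ T)]
    · refine Finset.sum_congr rfl fun i hi => ?_
      have hiS : i ∉ St := fun h => Finset.disjoint_left.mp hTdisj h hi
      rw [hzt i, if_neg hiS, if_pos hi, hθt0 i hiS]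
      field_simp
      ring
    · intro i _ hi
      by_cases hiS : i ∈ St
      · rw [hzt i, if_pos hiS]
        ring
      · rw [hzt i, if_neg hiS, if_neg hi, hθt0 i hiS]
        ring
  · set B := (Finset.univ.filter fun i => θstar i ≠ 0) \ St with hB
    have hBc : B.card ≤ T.card := by
      have h1 : B.card ≤ (Finset.univ.filter fun i => θstar i ≠ 0).card :=
        Finset.card_le_card Finset.sdiff_subset
      omega
    have hBT : (B \ T).card ≤ (T \ B).card := by
      have h1 := Finset.card_sdiff_add_card_inter B T
      have h2 := Finset.card_sdiff_add_card_inter T B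
      rw [Finset.inter_comm T B] at h2
      omega
    have key : ∑ i ∈ B \ T, (grad θt i) ^ 2 ≤ ∑ i ∈ T \ B, (grad θt i) ^ 2 := by
      rcases (B \ T).eq_empty_or_nonempty with he | hne
      · rw [he, Finset.sum_empty]
        exact Finset.sum_nonneg fun i _ => sq_nonneg _
      · obtain ⟨j, hj, hmax⟩ := Finset.exists_max_image (B \ T) (fun i => (grad θt i) ^ 2) hne
        have hjB := (Finset.mem_sdiff.mp hj).1
        have hjT := (Finset.mem_sdiff.mp hj).2
        have hjS := (Finset.mem_sdiff.mp hjB).2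
        have h1 := Finset.sum_le_card_nsmul (B \ T) (fun i => (grad θt i) ^ 2) _ hmax
        have h2 := Finset.card_nsmul_le_sum (T \ B) (fun i => (grad θt i) ^ 2)
          ((grad θt j) ^ 2)
          (fun i hi => sq_le_sq.mpr (hTtop i (Finset.mem_sdiff.mp hi).1 j hjS hjT))
        refine h1.trans (le_trans ?_ h2)
        exact nsmul_le_nsmul_left (sq_nonneg _) hBT
    have e1 := Finset.sum_inter_add_sum_sdiff B T (fun i => (grad θt i) ^ 2)
    have e2 := Finset.sum_inter_add_sum_sdiff T B (fun i => (grad θt i) ^ 2)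
    rw [Finset.inter_comm T B] at e2
    have hle : ∑ i ∈ B, (grad θt i) ^ 2 ≤ ∑ i ∈ T, (grad θt i) ^ 2 := by linarith
    have hpos : 0 < 1 / (2 * L) := by positivity
    nlinarith
  · have h := hRSC θstar θt (by omega)
    set B := (Finset.univ.filter fun i => θstar i ≠ 0) \ St with hB
    have hlow : -(1 / (2 * α)) * ∑ i ∈ B, (grad θt i) ^ 2 ≤
        (∑ i, (θstar i - θt i) * grad θt i) + α / 2 * ∑ i, (θstar i - θt i) ^ 2 := by
      rw [Finset.mul_sum, Finset.mul_sum, ← Finset.sum_add_distrib]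
      have hterm : ∀ i, (if i ∈ B then -(1 / (2 * α)) * (grad θt i) ^ 2 else 0) ≤
          (θstar i - θt i) * grad θt i + α / 2 * (θstar i - θt i) ^ 2 := by
        intro i
        by_cases hiB : i ∈ B
        · rw [if_pos hiB]
          have : (θstar i - θt i) * grad θt i + α / 2 * (θstar i - θt i) ^ 2
              - -(1 / (2 * α)) * (grad θt i) ^ 2
              = 1 / (2 * α) * (α * (θstar i - θt i) + grad θt i) ^ 2 := by
            field_simp
            ring
          have h0 : 0 ≤ 1 / (2 * α) * (α * (θstar i - θt i) + grad θt i) ^ 2 := by positivity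
          linarith
        · rw [if_neg hiB]
          by_cases hiS : i ∈ St
          · rw [hg0 i hiS, mul_zero, zero_add]
            positivity
          · have hs0 : θstar i = 0 := by
              by_contra hne
              exact hiB (Finset.mem_sdiff.mpr
                ⟨Finset.mem_filter.mpr ⟨Finset.mem_univ i, hne⟩, hiS⟩)
            rw [hs0, hθt0 i hiS]
            simp
      have hs := Finset.sum_le_sum fun i (_ : i ∈ Finset.univ) => hterm i
      rw [← Finset.sum_filter, Finset.filter_mem_eq_inter, Finset.univ_inter] at hs
      exact hs
    have hfin : f θt - f θstar ≤ 1 / (2 * α) * ∑ i ∈ B, (grad θt i) ^ 2 := by linarith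
    have hm := mul_le_mul_of_nonneg_left hfin (by positivity : 0 ≤ α / L)
    have he : α / L * (1 / (2 * α) * ∑ i ∈ B, (grad θt i) ^ 2) =
        1 / (2 * L) * ∑ i ∈ B, (grad θt i) ^ 2 := by
      field_simp
    linarith
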